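/- Let d ≥ 2 and j_1 ≥ ⋯ ≥ j_d ≥ 1 with N = j_1 + ⋯ + j_d, and suppose j_1 ≥ j_2 + ⋯ + j_d. Then the limit as n → ∞ of (log₂ rk(D(j_1,…,j_d)^{⊗n})) / n exists and equals Σ_{i=2}^d log₂(j_i + 1). (Equivalently, the SLOCC entanglement transformation rate R(GHZ_N, D(j_1,…,j_d)) equals (Σ_{i=2}^d log₂(j_i+1))^{−1}, since a state is reachable from GHZ_N^{⊗m} by SLOCC if and only if its tensor rank is at most 2^m.) -/

import Mathlib

/-- The unnormalized Dicke tensor D(j_1,…,j_d). -/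
noncomputable def Dicke (d : ℕ) (j : Fin d → ℕ) (N : ℕ) (s : Fin N → Fin d) : ℂ :=
  if ∀ i, (Finset.univ.filter fun p => s p = i).card = j i then 1 else 0

/-- The n-th tensor power D(j_1,…,j_d)^{⊗n}. -/
noncomputable def DickePow (d : ℕ) (j : Fin d → ℕ) (N n : ℕ)
    (α : Fin N → Fin n → Fin d) : ℂ :=
  ∏ t, Dicke d j N (fun p => α p t)

/-- The tensor rank of D(j_1,…,j_d)^{⊗n}: the least r admitting a rank-r decomposition. -/
noncomputable def rkDickePow (d : ℕ) (j : Fin d → ℕ) (N n : ℕ) : ℕ :=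
  sInf {r : ℕ | ∃ u : Fin r → Fin N → (Fin n → Fin d) → ℂ,
    ∀ α : Fin N → Fin n → Fin d, DickePow d j N n α = ∑ t, ∏ p, u t p (α p)}

/-!
Fix a symbol `z` and put `C = ∏_{i ≠ z} (j i + 1)`; the claim is that `rk(D^{⊗n})` equals `C ^ n` up
to a factor linear in `n`.

*Lower bound.* Cut the parties into a set `S` of size `∑_{i ≠ z} j i` and its complement, which by
assumption is at least as large. For each profile `k` with `0 ≤ k i ≤ j i` there is a word on `S`
containing every `i ≠ z` exactly `k i` times and a word on `Sᶜ` containing it `j i - k i` times. On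
these inputs the Dicke tensor is the identity matrix of size `C`, so its `n`-th power restricts to
the identity matrix of size `C ^ n`.

*Upper bound.* An equation `∑ p, f p (α p) = a` in a finite abelian group `G` has rank at most
`|G|`, by expanding its indicator in characters. To test that all `n * (d - 1)` symbol counts are
right it suffices to know each of them modulo `j i + 1`, which forces it to be at least `j i`, and
the sum of all of them, which lies in `[0, n * N]`. Hence `|G| = (n * N + 1) * C ^ n` is enough.
-/

open Finset Filter Topology

/-- The `ι`-party tensor `T`, with index type `X p` for party `p`, is a sum of `r` product tensors.
The least such `r` is the tensor rank of `T`. -/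
def HasRankDecomposition {ι R : Type*} [Fintype ι] [CommSemiring R] {X : ι → Type*}
    (T : (∀ p, X p) → R) (r : ℕ) : Prop :=
  ∃ u : Fin r → ∀ p, X p → R, ∀ α, T α = ∑ t, ∏ p, u t p (α p)

section Decomposition

variable {ι : Type*} [Fintype ι] {X : ι → Type*}

theorem HasRankDecomposition.card_le_of_piecewise_eq_one {R κ : Type*} [CommSemiring R]
    [StrongRankCondition R] [DecidableEq ι] [Fintype κ] [DecidableEq κ]
    {T : (∀ p, X p) → R} {r : ℕ} (hT : HasRankDecomposition T r) (S : Finset ι)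
    (a b : κ → ∀ p, X p)
    (hone : ∀ k l, T (S.piecewise (a k) (b l)) = (1 : Matrix κ κ R) k l) :
    Fintype.card κ ≤ r := by
  obtain ⟨u, hu⟩ := hT
  let A : Matrix κ (Fin r) R := .of fun k t => ∏ p ∈ S, u t p (a k p)
  let B : Matrix (Fin r) κ R := .of fun t l => ∏ p ∈ Sᶜ, u t p (b l p)
  have hAB : A * B = 1 := by
    ext k l
    rw [← hone, hu, Matrix.mul_apply]
    refine sum_congr rfl fun t _ => ?_
    rw [← prod_mul_prod_compl S]
    congr 1 <;> refine prod_congr rfl fun p hp => ?_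
    · rw [piecewise_eq_of_mem _ _ _ hp]
    · rw [piecewise_eq_of_notMem _ _ _ (mem_compl.mp hp)]
  calc Fintype.card κ = (A * B).rank := by rw [hAB, Matrix.rank_one]
    _ ≤ A.rank := Matrix.rank_mul_le_left A B
    _ ≤ r := by simpa using A.rank_le_card_width

theorem addChar_map_sum {G M : Type*} [AddCommMonoid G] [CommMonoid M] (ψ : AddChar G M)
    (g : ι → G) : ψ (∑ p, g p) = ∏ p, ψ (g p) :=
  map_prod ψ.toMonoidHom (fun p => Multiplicative.ofAdd (g p)) univ

theorem ite_eq_inv_card_mul_sum_addChar {G : Type*} [AddCommGroup G] [Fintype G] [DecidableEq G]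
    (g a : G) :
    (if g = a then 1 else 0 : ℂ) = (Fintype.card G : ℂ)⁻¹ * ∑ ψ : AddChar G ℂ, ψ (-a) * ψ g := by
  simp_rw [← AddChar.map_add_eq_mul, AddChar.sum_apply_eq_ite, neg_add_eq_zero, eq_comm (a := a)]
  split_ifs <;> simp

theorem hasRankDecomposition_sum_eq [Nonempty ι] {G : Type*} [AddCommGroup G] [Fintype G]
    [DecidableEq G] (f : ∀ p, X p → G) (a : G) :
    HasRankDecomposition (fun α => if ∑ p, f p (α p) = a then (1 : ℂ) else 0)
      (Fintype.card G) := by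
  classical
  let e : Fin (Fintype.card G) ≃ AddChar G ℂ := Fintype.equivOfCardEq (by simp [AddChar.card_eq])
  -- The coefficient of each character is absorbed into the factor of one party.
  obtain ⟨p₀⟩ := ‹Nonempty ι›
  let coeff (ψ : AddChar G ℂ) (p : ι) : ℂ :=
    if p = p₀ then (Fintype.card G : ℂ)⁻¹ * ψ (-a) else 1
  refine ⟨fun t p x => coeff (e t) p * e t (f p x), fun α => ?_⟩
  calc (if ∑ p, f p (α p) = a then (1 : ℂ) else 0)
      = ∑ ψ : AddChar G ℂ, ∏ p, coeff ψ p * ψ (f p (α p)) := by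
        simp only [ite_eq_inv_card_mul_sum_addChar, mul_sum, prod_mul_distrib, addChar_map_sum,
          coeff, Fintype.prod_ite_eq', mul_assoc]
    _ = ∑ t, ∏ p, coeff (e t) p * e t (f p (α p)) := (e.sum_comp _).symm

/-- The group element recording a vector `c` of counts by its total modulo `M + 1` and each entry
`c s` modulo `b s + 1`. -/
def totalAndResidues {σ : Type*} [Fintype σ] (b : σ → ℕ) (M : ℕ) :
    (σ → ℕ) →+ ZMod (M + 1) × ∀ s, ZMod (b s + 1) where
  toFun c := ((∑ s, c s : ℕ), fun s => c s)
  map_zero' := by ext <;> simp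
  map_add' c c' := by ext <;> simp [sum_add_distrib]

theorem totalAndResidues_eq_iff {σ : Type*} [Fintype σ] {c b : σ → ℕ} {M : ℕ}
    (hc : ∑ s, c s ≤ M) (hb : ∑ s, b s ≤ M) :
    totalAndResidues b M c = totalAndResidues b M b ↔ c = b := by
  refine ⟨fun h => ?_, fun h => h ▸ rfl⟩
  have htotal : ∑ s, b s = ∑ s, c s := by
    have hmod := (ZMod.natCast_eq_natCast_iff' _ _ _).mp (congrArg Prod.fst h)
    rw [Nat.mod_eq_of_lt (by lia), Nat.mod_eq_of_lt (by lia)] at hmod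
    exact hmod.symm
  have hle (s : σ) : b s ≤ c s := by
    have hmod := (ZMod.natCast_eq_natCast_iff' _ _ _).mp (congrFun (congrArg Prod.snd h) s)
    rw [Nat.mod_eq_of_lt (Nat.lt_succ_self (b s))] at hmod
    exact hmod.symm.trans_le (Nat.mod_le _ _)
  funext s
  exact ((sum_eq_sum_iff_of_le fun s _ => hle s).mp htotal s (mem_univ s)).symm

theorem hasRankDecomposition_forall_sum_eq [Nonempty ι] {σ : Type*} [Fintype σ]
    (f : ∀ p, X p → σ → ℕ) (b : σ → ℕ) {M : ℕ}
    (hf : ∀ α : ∀ p, X p, ∑ s, ∑ p, f p (α p) s ≤ M) (hb : ∑ s, b s ≤ M) :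
    HasRankDecomposition (fun α => if ∀ s, ∑ p, f p (α p) s = b s then (1 : ℂ) else 0)
      ((M + 1) * ∏ s, (b s + 1)) := by
  classical
  have hiff (α : ∀ p, X p) : (∀ s, ∑ p, f p (α p) s = b s) ↔
      ∑ p, totalAndResidues b M (f p (α p)) = totalAndResidues b M b := by
    rw [← map_sum, totalAndResidues_eq_iff (by simpa using hf α) hb, funext_iff]
    simp only [Finset.sum_apply]
  have hcard : Fintype.card (ZMod (M + 1) × ∀ s, ZMod (b s + 1)) = (M + 1) * ∏ s, (b s + 1) := by
    simp [ZMod.card]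
  simpa only [hiff, hcard] using hasRankDecomposition_sum_eq
    (fun p x => totalAndResidues b M (f p x)) (totalAndResidues b M b)

end Decomposition

section Words

variable {ι κ : Type*} [DecidableEq κ]

theorem card_filter_piecewise [Fintype ι] [DecidableEq ι] (S : Finset ι) (v w : ι → κ) (i : κ) :
    #{p | S.piecewise v w p = i} = #{p ∈ S | v p = i} + #{p ∈ Sᶜ | w p = i} := by
  simp only [card_filter]
  rw [← sum_add_sum_compl S]
  congr 1 <;> refine sum_congr rfl fun p hp => ?_
  · rw [piecewise_eq_of_mem _ _ _ hp]
  · rw [piecewise_eq_of_notMem _ _ _ (mem_compl.mp hp)]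

variable [Fintype κ]

theorem exists_forall_card_fiber_eq [Fintype ι] (c : κ → ℕ) (hc : ∑ i, c i = Fintype.card ι) :
    ∃ w : ι → κ, ∀ i, #{p | w p = i} = c i := by
  let e : ι ≃ Σ i, Fin (c i) := Fintype.equivOfCardEq (by simp [hc])
  refine ⟨fun p => (e p).1, fun i => ?_⟩
  rw [← Fintype.card_subtype, ← Fintype.card_fin (c i)]
  exact Fintype.card_congr ((e.subtypeEquiv fun _ => Iff.rfl).trans (Equiv.sigmaSubtype i))

theorem exists_forall_ne_card_filter_eq (S : Finset ι) (z : κ) (c : {i // i ≠ z} → ℕ)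
    (hc : ∑ i, c i ≤ #S) : ∃ w : ι → κ, ∀ i : {i // i ≠ z}, #{p ∈ S | w p = i} = c i := by
  classical
  let c' (i : κ) : ℕ := if h : i = z then #S - ∑ i, c i else c ⟨i, h⟩
  have hc' (i : {i // i ≠ z}) : c' i = c i := dif_neg i.2
  obtain ⟨w, hw⟩ := exists_forall_card_fiber_eq (ι := S) c' <| by
    rw [Fintype.sum_eq_add_sum_subtype_ne _ z]
    simp [hc', c', hc]
  refine ⟨fun p => if h : p ∈ S then w ⟨p, h⟩ else z, fun i => ?_⟩
  rw [← hc', ← hw, card_filter, card_filter, ← sum_coe_sort]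
  simp

theorem forall_card_fiber_eq_iff_forall_ne [Fintype ι] (z : κ) {c : κ → ℕ}
    (hc : ∑ i, c i = Fintype.card ι) (w : ι → κ) :
    (∀ i, #{p | w p = i} = c i) ↔ ∀ i : {i // i ≠ z}, #{p | w p = i} = c i := by
  refine ⟨fun h i => h i, fun h i => ?_⟩
  obtain rfl | hi := eq_or_ne i z
  · have hfibers : ∑ i, #{p | w p = i} = Fintype.card ι := by
      simpa using (card_eq_sum_card_fiberwise (s := univ) (t := univ) (f := w) (by simp)).symm
    rw [Fintype.sum_eq_add_sum_subtype_ne _ i] at hc hfibers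
    simp only [h] at hfibers
    lia
  · exact h ⟨i, hi⟩

end Words

section Dicke

variable {d N n : ℕ} {j : Fin d → ℕ}

theorem dickePow_eq_ite (z : Fin d) (hN : N = ∑ i, j i) (α : Fin N → Fin n → Fin d) :
    DickePow d j N n α =
      if ∀ t, ∀ i : {i // i ≠ z}, #{p | α p t = i} = j i then 1 else 0 := by
  have hcard : ∑ i, j i = Fintype.card (Fin N) := by simp [hN]
  simp only [DickePow, Dicke, forall_card_fiber_eq_iff_forall_ne z hcard, prod_ite_zero,
    prod_const_one, mem_univ, true_imp_iff]

theorem exists_cut_forall_card_fiber_eq_iff (z : Fin d) (hN : N = ∑ i, j i)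
    (hbig : ∑ i : {i // i ≠ z}, j i ≤ j z) :
    ∃ (S : Finset (Fin N)) (a b : (∀ i : {i // i ≠ z}, Fin (j i + 1)) → Fin N → Fin d), ∀ k l,
      (∀ i : {i // i ≠ z}, #{p | S.piecewise (a k) (b l) p = i} = j i) ↔ k = l := by
  have hN' : N = j z + ∑ i : {i // i ≠ z}, j i := by
    rw [hN, Fintype.sum_eq_add_sum_subtype_ne _ z]
  obtain ⟨S, -, hS⟩ : ∃ S ⊆ (univ : Finset (Fin N)), #S = ∑ i : {i // i ≠ z}, j i :=
    exists_subset_card_eq (by rw [card_fin]; lia)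
  have hSc : ∑ i : {i // i ≠ z}, j i ≤ #Sᶜ := by rw [card_compl, Fintype.card_fin]; lia
  choose a ha using fun k : ∀ i : {i // i ≠ z}, Fin (j i + 1) =>
    exists_forall_ne_card_filter_eq S z (fun i => k i)
      (hS ▸ sum_le_sum fun i _ => Nat.le_of_lt_succ (k i).2)
  choose b hb using fun l : ∀ i : {i // i ≠ z}, Fin (j i + 1) =>
    exists_forall_ne_card_filter_eq Sᶜ z (fun i => j i - l i)
      (hSc.trans' (sum_le_sum fun i _ => Nat.sub_le _ _))
  refine ⟨S, a, b, fun k l => ?_⟩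
  rw [funext_iff]
  refine forall_congr' fun i => ?_
  have hl := (l i).2
  rw [card_filter_piecewise, ha, hb, Fin.ext_iff]
  lia

theorem HasRankDecomposition.pow_le_of_dickePow {r : ℕ} (z : Fin d) (hN : N = ∑ i, j i)
    (hbig : ∑ i : {i // i ≠ z}, j i ≤ j z) (h : HasRankDecomposition (DickePow d j N n) r) :
    (∏ i : {i // i ≠ z}, (j i + 1)) ^ n ≤ r := by
  obtain ⟨S, a, b, hab⟩ := exists_cut_forall_card_fiber_eq_iff z hN hbig
  have hcard := h.card_le_of_piecewise_eq_one S
    (fun (k : Fin n → ∀ i : {i // i ≠ z}, Fin (j i + 1)) p t => a (k t) p)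
    (fun l p t => b (l t) p) fun k l => by
      have hcoord (t : Fin n) (p : Fin N) :
          S.piecewise (fun p t => a (k t) p) (fun p t => b (l t) p) p t =
            S.piecewise (a (k t)) (b (l t)) p := by
        by_cases hp : p ∈ S <;> simp [hp]
      simp only [dickePow_eq_ite z hN, hcoord, hab, Matrix.one_apply, funext_iff (f := k)]
  simpa using hcard

theorem hasRankDecomposition_dickePow (z : Fin d) (hN : N = ∑ i, j i) (hz : j z ≠ 0) (n : ℕ) :
    HasRankDecomposition (DickePow d j N n)
      ((n * N + 1) * (∏ i : {i // i ≠ z}, (j i + 1)) ^ n) := by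
  have hN' : N = j z + ∑ i : {i // i ≠ z}, j i := by
    rw [hN, Fintype.sum_eq_add_sum_subtype_ne _ z]
  have : Nonempty (Fin N) := ⟨⟨0, by lia⟩⟩
  let f (_ : Fin N) (x : Fin n → Fin d) (s : Fin n × {i // i ≠ z}) : ℕ :=
    if x s.1 = s.2 then 1 else 0
  have hf_le_one (x : Fin n → Fin d) (t : Fin n) :
      ∑ i : {i // i ≠ z}, (if x t = i then 1 else 0) ≤ 1 := by
    rw [← card_filter, card_le_one]
    simp only [mem_filter_univ]
    exact fun i hi i' hi' => Subtype.ext (hi.symm.trans hi')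
  have hf (α : Fin N → Fin n → Fin d) : ∑ s, ∑ p, f p (α p) s ≤ n * N := by
    rw [sum_comm]
    simp only [f, Fintype.sum_prod_type]
    calc _ ≤ ∑ _p : Fin N, ∑ _t : Fin n, 1 :=
          sum_le_sum fun p _ => sum_le_sum fun t _ => hf_le_one (α p) t
      _ = n * N := by simp [mul_comm]
  have hj : ∑ s : Fin n × {i // i ≠ z}, j s.2 ≤ n * N := by
    simpa [Fintype.sum_prod_type] using Nat.mul_le_mul_left n (by lia)
  have hprod : ∏ s : Fin n × {i // i ≠ z}, (j s.2 + 1) =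
      (∏ i : {i // i ≠ z}, (j i + 1)) ^ n := by
    simp [Fintype.prod_prod_type]
  have hDicke : DickePow d j N n = fun α => if ∀ s, ∑ p, f p (α p) s = j s.2 then 1 else 0 := by
    funext α
    simp only [dickePow_eq_ite z hN, f, Prod.forall, card_filter]
  rw [hDicke, ← hprod]
  exact hasRankDecomposition_forall_sum_eq f _ hf hj

theorem rkDickePow_le (z : Fin d) (hN : N = ∑ i, j i) (hz : j z ≠ 0) (n : ℕ) :
    rkDickePow d j N n ≤ (n * N + 1) * (∏ i : {i // i ≠ z}, (j i + 1)) ^ n :=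
  Nat.sInf_le (hasRankDecomposition_dickePow z hN hz n)

theorem pow_le_rkDickePow (z : Fin d) (hN : N = ∑ i, j i) (hz : j z ≠ 0)
    (hbig : ∑ i : {i // i ≠ z}, j i ≤ j z) (n : ℕ) :
    (∏ i : {i // i ≠ z}, (j i + 1)) ^ n ≤ rkDickePow d j N n :=
  HasRankDecomposition.pow_le_of_dickePow z hN hbig
    (Nat.sInf_mem (s := {r | HasRankDecomposition (DickePow d j N n) r})
      ⟨_, hasRankDecomposition_dickePow z hN hz n⟩)

end Dicke

section Growth

theorem tendsto_logb_mul_add_one_div_atTop_nhds_zero (B : ℝ) {M : ℝ} (hM : 0 < M) :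
    Tendsto (fun n : ℕ => Real.logb B (n * M + 1) / n) atTop (𝓝 0) := by
  have hlin : Tendsto (fun n : ℕ => (n : ℝ) * M + 1) atTop atTop :=
    tendsto_atTop_add_const_right _ _ (tendsto_natCast_atTop_atTop.atTop_mul_const hM)
  have hlog := (Real.tendsto_pow_log_div_mul_add_atTop M⁻¹ (-M⁻¹) 1 (inv_ne_zero hM.ne')).comp hlin
  have hdenom (n : ℕ) : M⁻¹ * (n * M + 1) + -M⁻¹ = n := by field_simp; ring
  simpa [Function.comp_def, hdenom, Real.logb, div_right_comm] using hlog.div_const (Real.log B)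

theorem tendsto_logb_div_of_pow_le_of_le_mul_pow {B C M : ℝ} (hB : 1 < B) (hC : 0 < C)
    (hM : 0 < M) {r : ℕ → ℝ} (hlower : ∀ n, C ^ n ≤ r n)
    (hupper : ∀ n : ℕ, r n ≤ (n * M + 1) * C ^ n) :
    Tendsto (fun n : ℕ => Real.logb B (r n) / n) atTop (𝓝 (Real.logb B C)) := by
  have hlim : Tendsto (fun n : ℕ => Real.logb B (n * M + 1) / n + Real.logb B C) atTop
      (𝓝 (Real.logb B C)) := by
    simpa using (tendsto_logb_mul_add_one_div_atTop_nhds_zero B hM).add_const (Real.logb B C)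
  refine tendsto_of_tendsto_of_tendsto_of_le_of_le' tendsto_const_nhds hlim ?_ ?_ <;>
    filter_upwards [eventually_gt_atTop 0] with n hn
  · rw [le_div_iff₀ (by positivity), mul_comm, ← Real.logb_pow]
    exact Real.logb_le_logb_of_le hB (by positivity) (hlower n)
  · rw [div_add' _ _ _ (by positivity), mul_comm (Real.logb B C), ← Real.logb_pow,
      ← Real.logb_mul (by positivity) (by positivity)]
    gcongr
    · exact (pow_pos hC n).trans_le (hlower n)
    · exact hupper n

end Growth

theorem log_rank_DickePow_div_n_tendsto_general {d N : ℕ} (j : Fin d → ℕ) (z : Fin d)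
    (hz : j z ≠ 0) (hN : N = ∑ i, j i) (hbig : ∑ i ∈ univ.erase z, j i ≤ j z) :
    Tendsto (fun n : ℕ => Real.logb 2 (rkDickePow d j N n) / n) atTop
      (𝓝 (∑ i ∈ univ.erase z, Real.logb 2 (j i + 1))) := by
  have hmem (i : Fin d) : i ∈ univ.erase z ↔ i ≠ z := by simp
  have hN_pos : 0 < N := hN ▸ sum_pos_iff.mpr ⟨z, mem_univ z, Nat.pos_of_ne_zero hz⟩
  have hlogb : ∑ i ∈ univ.erase z, Real.logb 2 (j i + 1) =
      Real.logb 2 (∏ i : {i // i ≠ z}, (j i + 1 : ℝ)) := by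
    rw [Real.logb_prod _ _ fun i _ => by positivity]
    exact sum_subtype _ hmem _
  have hbig' : ∑ i : {i // i ≠ z}, j i ≤ j z := (sum_subtype _ hmem j).symm.trans_le hbig
  rw [hlogb]
  exact tendsto_logb_div_of_pow_le_of_le_mul_pow one_lt_two (by positivity)
    (Nat.cast_pos.mpr hN_pos)
    (fun n => mod_cast pow_le_rkDickePow z hN hz hbig' n)
    (fun n => mod_cast rkDickePow_le z hN hz n)

/-- for d ≥ 2, j_1 ≥ ⋯ ≥ j_d ≥ 1, N = Σ j_i with j_1 ≥ j_2 + ⋯ + j_d,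
lim_{n→∞} (log₂ rk(D(j_1,…,j_d)^{⊗n})) / n = Σ_{i=2}^d log₂(j_i + 1).
(Equivalently, R(GHZ_N, D(j_1,…,j_d)) = (Σ_{i=2}^d log₂(j_i+1))^{−1}.) -/
theorem log_rank_DickePow_div_n_tendsto (d : ℕ) (hd : 2 ≤ d) (j : Fin d → ℕ)
    (hmono : Antitone j) (hpos : ∀ i, 1 ≤ j i) (N : ℕ) (hN : N = ∑ i, j i)
    (hbig : ∑ i ∈ Finset.univ.erase (⟨0, by omega⟩ : Fin d), j i ≤ j ⟨0, by omega⟩) :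
    Filter.Tendsto (fun n : ℕ => Real.logb 2 (rkDickePow d j N n) / n) Filter.atTop
      (nhds (∑ i ∈ Finset.univ.erase (⟨0, by omega⟩ : Fin d), Real.logb 2 (j i + 1))) :=
  log_rank_DickePow_div_n_tendsto_general j _ (Nat.one_le_iff_ne_zero.mp (hpos _)) hN hbig
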